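/- Let 𝔤 be a finite-dimensional complex Lie algebra, let g ∈ S(𝔤) be a semi-invariant with weight χ ∈ 𝔤*, and let a ∈ 𝔤*. Let U ⊆ 𝔤* be open and let λ: U → ℂ be an analytic function satisfying g(x − λ(x)a) = 0 for all x ∈ U. Let x₀ ∈ U be a point at which ⟨a, dg(x₀ − λ(x₀)a)⟩ ≠ 0. Then for every function h that is analytic in a neighbourhood of x₀ one has ⟨x₀, [dλ(x₀), dh(x₀)]⟩ = λ(x₀)·⟨a, [dλ(x₀), dh(x₀)]⟩, i.e. {λ, h}(x₀) = λ(x₀)·{λ, h}_a(x₀). -/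

import Mathlib

/-- A function on the dual space `𝔤* ≅ L →L[ℂ] ℂ` is a polynomial function
(i.e. corresponds to an element of the symmetric algebra `S(𝔤)`) if it lies in the
`ℂ`-subalgebra of functions generated by the evaluations `x ↦ ⟨x, ξ⟩`, `ξ ∈ 𝔤`. -/
def IsPolyFun (L : Type*) [NormedAddCommGroup L] [NormedSpace ℂ L]
    (p : (L →L[ℂ] ℂ) → ℂ) : Prop :=
  p ∈ Algebra.adjoin ℂ (Set.range fun ξ : L => fun x : L →L[ℂ] ℂ => x ξ)

/-- `dp` represents the differential of `p : 𝔤* → ℂ`, with `dp x ∈ 𝔤` identified with a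
linear functional on `𝔤*` via the canonical isomorphism `𝔤 ≅ 𝔤**`:
`(fderiv ℂ p x) v = ⟨v, dp x⟩` for all `v ∈ 𝔤*`. -/
def RepDeriv (L : Type*) [NormedAddCommGroup L] [NormedSpace ℂ L]
    (p : (L →L[ℂ] ℂ) → ℂ) (dp : (L →L[ℂ] ℂ) → L) : Prop :=
  ∀ x v : L →L[ℂ] ℂ, fderiv ℂ p x v = v (dp x)

/-- The bilinear map `B` is a Lie bracket on the complex vector space `L` (which carries a
norm only in order to speak about differentials and analyticity; in finite dimension all
norms are equivalent): `B` is alternating and satisfies the Jacobi identity. -/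
def IsLieBracket (L : Type*) [NormedAddCommGroup L] [NormedSpace ℂ L]
    (B : L →ₗ[ℂ] L →ₗ[ℂ] L) : Prop :=
  (∀ ξ : L, B ξ ξ = 0) ∧
    ∀ ξ η ζ : L, B ξ (B η ζ) = B (B ξ η) ζ + B η (B ξ ζ)

/-- `g ∈ S(𝔤)` is a semi-invariant with weight `χ ∈ 𝔤*`:
`⟨x, [ξ, dg(x)]⟩ = χ(ξ) · g(x)` for all `ξ ∈ 𝔤`, `x ∈ 𝔤*`. -/
def IsSemiInvariant (L : Type*) [NormedAddCommGroup L] [NormedSpace ℂ L]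
    (B : L →ₗ[ℂ] L →ₗ[ℂ] L) (g : (L →L[ℂ] ℂ) → ℂ) (χ : L →L[ℂ] ℂ) : Prop :=
  IsPolyFun L g ∧ g ≠ 0 ∧
    ∃ dg : (L →L[ℂ] ℂ) → L, RepDeriv L g dg ∧
      ∀ (ξ : L) (x : L →L[ℂ] ℂ), x (B ξ (dg x)) = χ ξ * g x

/-!
Differentiating `g (x - λ(x) a) = 0` at `x₀`, and writing `y = x₀ - λ(x₀) a`, gives
`dg(y) = ⟨a, dg(y)⟩ dλ(x₀)`. Hence `dλ(x₀)` is a multiple of the differential of the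
semi-invariant at its zero `y`, where `⟨y, [ξ, dg(y)]⟩ = χ(ξ) g(y) = 0` for every `ξ`. Thus
`⟨x₀ - λ(x₀) a, [dλ(x₀), ξ]⟩ = 0`.
-/

open Filter NormedSpace Topology

section DualGradient

variable {𝕜 E : Type*} [NontriviallyNormedField 𝕜] [NormedAddCommGroup E] [NormedSpace 𝕜 E]

/-- The differential at `x` of a function `f` on the dual of `E` is evaluation at `ξ : E`: this is
`df(x) = ξ` under the identification of `E` with a subspace of its bidual. The vector `ξ` is an
argument because, for non-reflexive `E`, a differential need not lie in `E`. -/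
def HasDualGradientAt (f : StrongDual 𝕜 E → 𝕜) (ξ : E) (x : StrongDual 𝕜 E) : Prop :=
  HasFDerivAt f (inclusionInDoubleDual 𝕜 E ξ) x

theorem hasDualGradientAt_of_fderiv_apply_eq {f : StrongDual 𝕜 E → 𝕜} {ξ : E}
    {x : StrongDual 𝕜 E} (hf : DifferentiableAt 𝕜 f x) (hξ : ∀ v, fderiv 𝕜 f x v = v ξ) :
    HasDualGradientAt f ξ x :=
  hf.hasFDerivAt.congr_fderiv (ContinuousLinearMap.ext hξ)

end DualGradient

theorem IsPolyFun.differentiable {L : Type*} [NormedAddCommGroup L] [NormedSpace ℂ L]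
    {p : (L →L[ℂ] ℂ) → ℂ} (hp : IsPolyFun L p) : Differentiable ℂ p := by
  induction hp using Algebra.adjoin_induction with
  | mem p hp =>
    obtain ⟨ξ, rfl⟩ := hp
    exact (inclusionInDoubleDual ℂ L ξ).differentiable
  | algebraMap c => exact differentiable_const c
  | add p q _ _ hp hq => exact hp.add hq
  | mul p q _ _ hp hq => exact hp.mul hq

section ImplicitDifferentiation

variable {𝕜 V F : Type*} [NontriviallyNormedField 𝕜] [NormedAddCommGroup V] [NormedSpace 𝕜 V]
  [NormedAddCommGroup F] [NormedSpace 𝕜 F]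

theorem hasFDerivAt_eq_smulRight_of_eventually_apply_sub_smul_eq {g : V → F} {g' : V →L[𝕜] F}
    {lam : V → 𝕜} {lam' : V →L[𝕜] 𝕜} {a x₀ : V} {c : F}
    (hg : HasFDerivAt g g' (x₀ - lam x₀ • a)) (hlam : HasFDerivAt lam lam' x₀)
    (hconst : ∀ᶠ x in 𝓝 x₀, g (x - lam x • a) = c) :
    g' = lam'.smulRight (g' a) := by
  have hcomp : HasFDerivAt (fun x ↦ g (x - lam x • a))
      (g' ∘L (.id 𝕜 V - lam'.smulRight a)) x₀ :=
    hg.comp (f := fun x ↦ x - lam x • a) x₀ ((hasFDerivAt_id x₀).sub (hlam.smul_const a))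
  have hzero : g' ∘L (.id 𝕜 V - lam'.smulRight a) = 0 :=
    hcomp.unique ((hasFDerivAt_const c x₀).congr_of_eventuallyEq hconst)
  ext v
  have hv : g' v - lam' v • g' a = 0 := by simpa using DFunLike.congr_fun hzero v
  exact sub_eq_zero.mp hv

end ImplicitDifferentiation

section RootOfSemiInvariant

variable {𝕜 E : Type*} [NontriviallyNormedField 𝕜] [NormedAddCommGroup E] [NormedSpace 𝕜 E]
  [SeparatingDual 𝕜 E]

theorem HasDualGradientAt.eq_smul_of_eventually_apply_sub_smul_eq {g lam : StrongDual 𝕜 E → 𝕜}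
    {a x₀ : StrongDual 𝕜 E} {dg dl : E} {c : 𝕜}
    (hg : HasDualGradientAt g dg (x₀ - lam x₀ • a)) (hlam : HasDualGradientAt lam dl x₀)
    (hconst : ∀ᶠ x in 𝓝 x₀, g (x - lam x • a) = c) :
    dg = a dg • dl := by
  refine (SeparatingDual.eq_iff_forall_dual_eq (R := 𝕜)).mpr fun v ↦ ?_
  have hv := DFunLike.congr_fun
    (hasFDerivAt_eq_smulRight_of_eventually_apply_sub_smul_eq hg hlam hconst) v
  simpa [mul_comm] using hv

theorem root_of_semiInvariant_bracket_eq_general {B : E →ₗ[𝕜] E →ₗ[𝕜] E} (hB : B.IsAlt)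
    {g lam : StrongDual 𝕜 E → 𝕜} {χ : E → 𝕜} {a x₀ : StrongDual 𝕜 E} {dg dl : E}
    (hg : HasDualGradientAt g dg (x₀ - lam x₀ • a))
    (hsemi : ∀ ξ, (x₀ - lam x₀ • a) (B ξ dg) = χ ξ * g (x₀ - lam x₀ • a))
    (hlam : HasDualGradientAt lam dl x₀) (hroot : ∀ᶠ x in 𝓝 x₀, g (x - lam x • a) = 0)
    (hnd : a dg ≠ 0) (ξ : E) :
    x₀ (B dl ξ) = lam x₀ * a (B dl ξ) := by
  have hdg : dg = a dg • dl := hg.eq_smul_of_eventually_apply_sub_smul_eq hlam hroot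
  have hvanish : (x₀ - lam x₀ • a) (B ξ dg) = 0 := by
    rw [hsemi, hroot.self_of_nhds, mul_zero]
  have hsmul : a dg * (x₀ - lam x₀ • a) (B ξ dl) = 0 := by
    rwa [hdg, map_smul, map_smul, smul_eq_mul] at hvanish
  have hy : (x₀ - lam x₀ • a) (B dl ξ) = 0 := by
    rw [← hB.neg, map_neg, (mul_eq_zero.mp hsmul).resolve_left hnd, neg_zero]
  exact sub_eq_zero.mp hy

end RootOfSemiInvariant

/-- Lemma on roots of semi-invariants: if `λ : U → ℂ` is analytic with
`g(x − λ(x)a) = 0` on `U`, and `⟨a, dg(x₀ − λ(x₀)a)⟩ ≠ 0` at a point `x₀ ∈ U`, then for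
every function `h` analytic in a neighbourhood of `x₀` one has
`⟨x₀, [dλ(x₀), dh(x₀)]⟩ = λ(x₀) · ⟨a, [dλ(x₀), dh(x₀)]⟩`,
i.e. `{λ, h}(x₀) = λ(x₀) · {λ, h}_a(x₀)`. -/
theorem root_of_semiInvariant_bracket_eq
    {L : Type*} [NormedAddCommGroup L] [NormedSpace ℂ L] [FiniteDimensional ℂ L]
    (B : L →ₗ[ℂ] L →ₗ[ℂ] L) (hB : IsLieBracket L B)
    (g : (L →L[ℂ] ℂ) → ℂ) (χ : L →L[ℂ] ℂ)
    (hpoly : IsPolyFun L g) (hg0 : g ≠ 0)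
    (dg : (L →L[ℂ] ℂ) → L) (hdg : RepDeriv L g dg)
    (hsemi : ∀ (ξ : L) (x : L →L[ℂ] ℂ), x (B ξ (dg x)) = χ ξ * g x)
    (a : L →L[ℂ] ℂ)
    (U : Set (L →L[ℂ] ℂ)) (hU : IsOpen U)
    (lam : (L →L[ℂ] ℂ) → ℂ) (hlam : AnalyticOnNhd ℂ lam U)
    (hroot : ∀ x ∈ U, g (x - lam x • a) = 0)
    (x₀ : L →L[ℂ] ℂ) (hx₀ : x₀ ∈ U)
    (hnd : a (dg (x₀ - lam x₀ • a)) ≠ 0)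
    (h : (L →L[ℂ] ℂ) → ℂ) (hh : AnalyticAt ℂ h x₀)
    (dl dh : L)
    (hdl : ∀ v : L →L[ℂ] ℂ, fderiv ℂ lam x₀ v = v dl)
    (hdh : ∀ v : L →L[ℂ] ℂ, fderiv ℂ h x₀ v = v dh) :
    x₀ (B dl dh) = lam x₀ * a (B dl dh) :=
  root_of_semiInvariant_bracket_eq_general hB.1
    (hasDualGradientAt_of_fderiv_apply_eq (hpoly.differentiable _) (hdg _)) (fun ξ ↦ hsemi ξ _)
    (hasDualGradientAt_of_fderiv_apply_eq (hlam x₀ hx₀).differentiableAt hdl)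
    (eventually_of_mem (hU.mem_nhds hx₀) hroot) hnd dh
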